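/- arXiv:1701.06264 — 2 statements merged into one kernel-verified Lean document; each statement's English description precedes it below -/
import Mathlib

section
/- Let C : ℝ → ℝ be a continuous function satisfying C(a) ≥ a for all a ∈ ℝ and C(a) = a for all a ≥ 0. Let p and q be Lipschitz probability densities on ℝⁿ, both vanishing outside a compact set, let κ > 0, and define S_C(L) = ∬ C(‖x − z‖ + L(x) − L(z)) p(x) q(z) dx dz. Suppose L* : ℝⁿ → ℝ is nonnegative and κ-Lipschitz, satisfies S_C(L*) ≤ S_C(L) for every nonnegative κ-Lipschitz function L : ℝⁿ → ℝ, and satisfies ∫ L*(z) q(z) dz ≤ ∫ L*(x) p(x) dx. Then ∫ |p(x) − q(x)| dx = 0; that is, p = q Lebesgue-almost everywhere. (Paper's Lemma 5: distributional consistency of the Generalized LS-GAN for any admissible cost function C.) -/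
open MeasureTheory

/-- The GLS-GAN objective `S_C(L) = ∬ C(‖x − z‖ + L(x) − L(z)) p(x) q(z) dx dz`. -/
noncomputable def glsganS (n : ℕ) (C : ℝ → ℝ)
    (L p q : EuclideanSpace ℝ (Fin n) → ℝ) : ℝ :=
  ∫ x, ∫ z, C (‖x - z‖ + L x - L z) * (p x * q z)

/-! Since `C a ≥ a`, with equality for `a ≥ 0`, every admissible `1`-Lipschitz `g` satisfies

`∬ d dP dQ + (∫ L dP - ∫ L dQ) ≤ S_C(L) ≤ S_C(g) = ∬ d dP dQ + (∫ g dP - ∫ g dQ)`,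

where `P` and `Q` are the laws with densities `p` and `q` and `d` is the distance. The bracket on
the left is nonnegative, so `∫ g dQ ≤ ∫ g dP`. Rescaling and shifting extends this to every bounded
Lipschitz function `f`; applied to `f` and `-f` it gives `∫ f dP = ∫ f dQ`, and these integrals
determine a measure. -/

section LipschitzTests

variable {X : Type*} [PseudoMetricSpace X] [MeasurableSpace X]
  {P Q : Measure X} [IsProbabilityMeasure P] [IsProbabilityMeasure Q]

lemma integral_le_integral_of_forall_nonneg_lipschitzWith [OpensMeasurableSpace X]
    {K : NNReal} (hK : 0 < K)
    (h : ∀ g : X → ℝ, (∀ x, 0 ≤ g x) → (∃ B, ∀ x, g x ≤ B) → LipschitzWith K g →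
      ∫ z, g z ∂Q ≤ ∫ x, g x ∂P)
    {f : X → ℝ} {B : ℝ} (hfB : ∀ x, |f x| ≤ B) {M : NNReal} (hf : LipschitzWith M f) :
    ∫ z, f z ∂Q ≤ ∫ x, f x ∂P := by
  set ε : NNReal := K / (M + 1)
  have hε : 0 < ε := by positivity
  have hεM : ε * M ≤ K := calc
    ε * M ≤ ε * (M + 1) := by gcongr; exact le_self_add
    _ = K := div_mul_cancel₀ K (by positivity)
  have integral_test (μ : Measure X) [IsProbabilityMeasure μ] :
      ∫ x, (ε : ℝ) * (f x + B) ∂μ = ε * (∫ x, f x ∂μ + B) := by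
    have hfμ : Integrable f μ :=
      .of_bound hf.continuous.measurable.aestronglyMeasurable B (.of_forall hfB)
    rw [integral_const_mul, integral_add hfμ (integrable_const B)]
    simp
  have key := h (fun x => ε * (f x + B))
    (fun x => mul_nonneg ε.2 (by linarith [neg_le_of_abs_le (hfB x)]))
    ⟨ε * (B + B), fun x => by gcongr; exact le_of_abs_le (hfB x)⟩
    (.of_dist_le_mul fun x z => calc
      dist (ε * (f x + B)) (ε * (f z + B)) = ε * dist (f x) (f z) := by
        rw [Real.dist_eq, Real.dist_eq, ← mul_sub, add_sub_add_right_eq_sub, abs_mul,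
          NNReal.abs_eq]
      _ ≤ ε * (M * dist x z) := by gcongr; exact hf.dist_le_mul x z
      _ = (ε * M : NNReal) * dist x z := by push_cast; ring
      _ ≤ K * dist x z := by gcongr)
  rw [integral_test Q, integral_test P] at key
  linarith [le_of_mul_le_mul_left key (NNReal.coe_pos.2 hε)]

lemma eq_of_forall_bounded_lipschitzWith_integral_eq [BorelSpace X]
    (h : ∀ (f : X → ℝ) (B : ℝ) (M : NNReal), (∀ x, |f x| ≤ B) → LipschitzWith M f →
      ∫ x, f x ∂P = ∫ x, f x ∂Q) :
    P = Q := by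
  let lawP : ProbabilityMeasure X := ⟨P, inferInstance⟩
  let lawQ : ProbabilityMeasure X := ⟨Q, inferInstance⟩
  -- The constant sequence `P` converges weakly to `Q`, and weak limits are unique.
  have hlim : Filter.Tendsto (fun _ : ℕ => lawP) Filter.atTop (nhds lawQ) := by
    refine tendsto_iff_forall_lipschitz_integral_tendsto.2 fun f ⟨B, hB⟩ ⟨M, hM⟩ => ?_
    obtain ⟨x₀⟩ := P.nonempty_of_neZero
    have hfB (x : X) : |f x| ≤ |f x₀| + B := by
      have := abs_sub_abs_le_abs_sub (f x) (f x₀)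
      linarith [hB x x₀, Real.dist_eq (f x) (f x₀)]
    exact tendsto_const_nhds_iff.2 (h f _ M hfB hM)
  exact congrArg ProbabilityMeasure.toMeasure (tendsto_nhds_unique tendsto_const_nhds hlim)

lemma eq_of_forall_nonneg_lipschitzWith_integral_le [BorelSpace X] {K : NNReal} (hK : 0 < K)
    (h : ∀ g : X → ℝ, (∀ x, 0 ≤ g x) → (∃ B, ∀ x, g x ≤ B) → LipschitzWith K g →
      ∫ z, g z ∂Q ≤ ∫ x, g x ∂P) :
    P = Q := by
  refine eq_of_forall_bounded_lipschitzWith_integral_eq fun f B M hfB hf => le_antisymm ?_ ?_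
  · have hneg := integral_le_integral_of_forall_nonneg_lipschitzWith hK h (f := fun x => -f x)
      (fun x => (abs_neg (f x)).trans_le (hfB x)) hf.neg
    simpa only [integral_neg, neg_le_neg_iff] using hneg
  · exact integral_le_integral_of_forall_nonneg_lipschitzWith hK h hfB hf

end LipschitzTests

lemma lipschitzWith_iff_abs_sub_le {E : Type*} [SeminormedAddCommGroup E] {f : E → ℝ}
    {κ : NNReal} : LipschitzWith κ f ↔ ∀ x z, |f x - f z| ≤ κ * ‖x - z‖ := by
  simp only [lipschitzWith_iff_dist_le_mul, dist_eq_norm, Real.norm_eq_abs]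

lemma integrable_of_continuous_of_measure_compl_eq_zero {X E : Type*} [TopologicalSpace X]
    [T2Space X] [MeasurableSpace X] [OpensMeasurableSpace X] [NormedAddCommGroup E] {D : Set X}
    {μ : Measure X} [IsFiniteMeasureOnCompacts μ] {f : X → E}
    (hf : Continuous f) (hD : IsCompact D) (hμD : μ Dᶜ = 0) : Integrable f μ := by
  rw [← Measure.restrict_eq_self_of_ae_mem (mem_ae_iff.2 hμD)]
  exact hf.continuousOn.integrableOn_compact hD

/-- The measure with real density `p` with respect to `μ`; negative values of `p` count as `0`. -/
noncomputable def densityMeasure {X : Type*} [MeasurableSpace X] (μ : Measure X) (p : X → ℝ) :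
    Measure X :=
  μ.withDensity fun x => ENNReal.ofReal (p x)

section DensityMeasure

variable {X : Type*} [MeasurableSpace X] {μ : Measure X} {p q : X → ℝ}

instance [SFinite μ] : SFinite (densityMeasure μ p) :=
  inferInstanceAs (SFinite (μ.withDensity _))

lemma isProbabilityMeasure_densityMeasure (hp_nonneg : ∀ x, 0 ≤ p x) (hp_int : ∫ x, p x ∂μ = 1) :
    IsProbabilityMeasure (densityMeasure μ p) where
  measure_univ := by
    have hp : Integrable p μ := .of_integral_ne_zero (by simp [hp_int])
    rw [densityMeasure, withDensity_apply _ .univ, Measure.restrict_univ,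
      ← ofReal_integral_eq_lintegral_ofReal hp (.of_forall hp_nonneg), hp_int, ENNReal.ofReal_one]

lemma densityMeasure_apply_eq_zero (hp : Measurable p) {s : Set X} (hps : ∀ x ∈ s, p x = 0) :
    densityMeasure μ p s = 0 := by
  have hempty : {x | ENNReal.ofReal (p x) ≠ 0} ∩ s = ∅ :=
    Set.eq_empty_of_forall_notMem fun x hx => hx.1 (by rw [hps x hx.2, ENNReal.ofReal_zero])
  rw [densityMeasure, withDensity_apply_eq_zero hp.ennreal_ofReal, hempty, measure_empty]

lemma integral_densityMeasure (hp : Measurable p) (hp_nonneg : ∀ x, 0 ≤ p x) (f : X → ℝ) :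
    ∫ x, f x ∂densityMeasure μ p = ∫ x, f x * p x ∂μ := by
  rw [densityMeasure, integral_withDensity_eq_integral_toReal_smul hp.ennreal_ofReal
    (.of_forall fun _ => ENNReal.ofReal_lt_top)]
  simp only [ENNReal.toReal_ofReal (hp_nonneg _), smul_eq_mul, mul_comm]

lemma ae_eq_of_densityMeasure_eq [SigmaFinite μ] (hp : Measurable p) (hp_nonneg : ∀ x, 0 ≤ p x)
    (hq : Measurable q) (hq_nonneg : ∀ x, 0 ≤ q x)
    (h : densityMeasure μ p = densityMeasure μ q) : p =ᵐ[μ] q := by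
  have hpq := (withDensity_eq_iff_of_sigmaFinite hp.ennreal_ofReal.aemeasurable
    hq.ennreal_ofReal.aemeasurable).1 h
  filter_upwards [hpq] with x hx
  exact (ENNReal.ofReal_eq_ofReal_iff (hp_nonneg x) (hq_nonneg x)).1 hx

end DensityMeasure

/-- The integrand `C(d(x, z) + L(x) − L(z))` of the GLS-GAN objective, on a pair `w = (x, z)` of a
real and a generated sample; `S_C(L)` is its integral against the product of their laws. -/
def glsganCost {X : Type*} [Dist X] (C : ℝ → ℝ) (L : X → ℝ) (w : X × X) : ℝ :=
  C (dist w.1 w.2 + L w.1 - L w.2)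

section GlsganCost

variable {X : Type*} [PseudoMetricSpace X] {C : ℝ → ℝ} {L g : X → ℝ}

lemma le_glsganCost (hC_ge : ∀ a, a ≤ C a) (w : X × X) :
    dist w.1 w.2 + L w.1 - L w.2 ≤ glsganCost C L w :=
  hC_ge _

lemma glsganCost_of_lipschitzWith_one (hC_eq : ∀ a, 0 ≤ a → C a = a) (hg : LipschitzWith 1 g) :
    glsganCost C g = fun w => dist w.1 w.2 + g w.1 - g w.2 := by
  funext w
  refine hC_eq _ ?_
  have hw : |g w.1 - g w.2| ≤ dist w.1 w.2 := by
    simpa only [Real.dist_eq, NNReal.coe_one, one_mul] using hg.dist_le_mul w.1 w.2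
  linarith [neg_le_of_abs_le hw]

variable [MeasurableSpace X] {P Q : Measure X}

lemma integrable_dist_of_integrable_glsganCost [OpensMeasurableSpace X]
    [SecondCountableTopology X] [IsFiniteMeasure P] [IsFiniteMeasure Q] (hC_ge : ∀ a, a ≤ C a)
    (hLP : Integrable L P) (hLQ : Integrable L Q) (hCL : Integrable (glsganCost C L) (P.prod Q)) :
    Integrable (fun w : X × X => dist w.1 w.2) (P.prod Q) := by
  refine ((hCL.sub (hLP.comp_fst Q)).add (hLQ.comp_snd P)).mono'
    continuous_dist.measurable.aestronglyMeasurable (.of_forall fun w => ?_)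
  rw [Real.norm_of_nonneg dist_nonneg]
  simp only [Pi.add_apply, Pi.sub_apply]
  linarith [le_glsganCost (L := L) hC_ge w]

lemma integrable_dist_add_sub [IsFiniteMeasure P] [IsFiniteMeasure Q]
    (hd : Integrable (fun w : X × X => dist w.1 w.2) (P.prod Q))
    (hLP : Integrable L P) (hLQ : Integrable L Q) :
    Integrable (fun w : X × X => dist w.1 w.2 + L w.1 - L w.2) (P.prod Q) :=
  (hd.add (hLP.comp_fst Q)).sub (hLQ.comp_snd P)

lemma integral_dist_add_sub [IsProbabilityMeasure P] [IsProbabilityMeasure Q]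
    (hd : Integrable (fun w : X × X => dist w.1 w.2) (P.prod Q))
    (hLP : Integrable L P) (hLQ : Integrable L Q) :
    ∫ w, (dist w.1 w.2 + L w.1 - L w.2) ∂P.prod Q =
      ∫ w, dist w.1 w.2 ∂P.prod Q + ∫ x, L x ∂P - ∫ z, L z ∂Q := by
  rw [integral_sub (hd.fun_add (hLP.comp_fst Q)) (hLQ.comp_snd P),
    integral_add hd (hLP.comp_fst Q), integral_fun_fst, integral_fun_snd]
  simp

lemma integral_le_integral_of_integral_glsganCost_le [IsProbabilityMeasure P]
    [IsProbabilityMeasure Q] (hC_ge : ∀ a, a ≤ C a) (hC_eq : ∀ a, 0 ≤ a → C a = a)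
    (hd : Integrable (fun w : X × X => dist w.1 w.2) (P.prod Q))
    (hLP : Integrable L P) (hLQ : Integrable L Q) (hCL : Integrable (glsganCost C L) (P.prod Q))
    (hgen : ∫ z, L z ∂Q ≤ ∫ x, L x ∂P)
    (hgP : Integrable g P) (hgQ : Integrable g Q) (hg : LipschitzWith 1 g)
    (hLg : ∫ w, glsganCost C L w ∂P.prod Q ≤ ∫ w, glsganCost C g w ∂P.prod Q) :
    ∫ z, g z ∂Q ≤ ∫ x, g x ∂P := by
  have sandwich := calc
    ∫ w, dist w.1 w.2 ∂P.prod Q + ∫ x, L x ∂P - ∫ z, L z ∂Q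
      = ∫ w, (dist w.1 w.2 + L w.1 - L w.2) ∂P.prod Q := (integral_dist_add_sub hd hLP hLQ).symm
    _ ≤ ∫ w, glsganCost C L w ∂P.prod Q :=
      integral_mono (integrable_dist_add_sub hd hLP hLQ) hCL (le_glsganCost hC_ge)
    _ ≤ ∫ w, glsganCost C g w ∂P.prod Q := hLg
    _ = ∫ w, dist w.1 w.2 ∂P.prod Q + ∫ x, g x ∂P - ∫ z, g z ∂Q := by
      rw [glsganCost_of_lipschitzWith_one hC_eq hg, integral_dist_add_sub hd hgP hgQ]
  linarith

end GlsganCost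

lemma integrable_glsganCost_of_isCompact {X : Type*} [MetricSpace X] [SecondCountableTopology X]
    [MeasurableSpace X] [OpensMeasurableSpace X] {C : ℝ → ℝ} {L : X → ℝ} {D : Set X}
    {P Q : Measure X} [IsFiniteMeasure P] [IsFiniteMeasure Q] (hC : Continuous C)
    (hL : Continuous L) (hD : IsCompact D) (hPD : P Dᶜ = 0) (hQD : Q Dᶜ = 0) :
    Integrable (glsganCost C L) (P.prod Q) := by
  refine integrable_of_continuous_of_measure_compl_eq_zero ?_ (hD.prod hD) ?_
  · unfold glsganCost
    fun_prop
  · rw [Set.compl_prod_eq_union, measure_union_null_iff, Measure.prod_prod, Measure.prod_prod,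
      hPD, hQD, zero_mul, mul_zero]
    exact ⟨rfl, rfl⟩

lemma integral_glsganCost_densityMeasure {n : ℕ} {C : ℝ → ℝ}
    {L p q : EuclideanSpace ℝ (Fin n) → ℝ} (hp : Measurable p) (hp_nonneg : ∀ x, 0 ≤ p x)
    (hq : Measurable q) (hq_nonneg : ∀ x, 0 ≤ q x)
    (hCL : Integrable (glsganCost C L) ((densityMeasure volume p).prod (densityMeasure volume q))) :
    ∫ w, glsganCost C L w ∂(densityMeasure volume p).prod (densityMeasure volume q) =
      glsganS n C L p q := by
  rw [integral_prod _ hCL, integral_densityMeasure hp hp_nonneg, glsganS]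
  congr! 2
  rw [integral_densityMeasure hq hq_nonneg, ← integral_mul_const]
  congr! 2
  rw [glsganCost, dist_eq_norm]
  ring

/-- The integrability premise in `hmin` keeps out competitors of infinite cost, whose Bochner
integral is `0` by convention. -/
theorem glsgan_distributional_consistency_general {X : Type*} [PseudoMetricSpace X]
    [SecondCountableTopology X] [MeasurableSpace X] [BorelSpace X]
    {P Q : Measure X} [IsProbabilityMeasure P] [IsProbabilityMeasure Q] {C : ℝ → ℝ} {L : X → ℝ}
    (hC_ge : ∀ a, a ≤ C a) (hC_eq : ∀ a, 0 ≤ a → C a = a) {κ : NNReal} (hκ : 0 < κ)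
    (hLP : Integrable L P) (hLQ : Integrable L Q) (hCL : Integrable (glsganCost C L) (P.prod Q))
    (hmin : ∀ g : X → ℝ, (∀ x, 0 ≤ g x) → LipschitzWith κ g →
      Integrable (glsganCost C g) (P.prod Q) →
      ∫ w, glsganCost C L w ∂P.prod Q ≤ ∫ w, glsganCost C g w ∂P.prod Q)
    (hgen : ∫ z, L z ∂Q ≤ ∫ x, L x ∂P) :
    P = Q := by
  have hd := integrable_dist_of_integrable_glsganCost hC_ge hLP hLQ hCL
  refine eq_of_forall_nonneg_lipschitzWith_integral_le (lt_min hκ one_pos)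
    fun g hg_nonneg ⟨B, hgB⟩ hg => ?_
  have hg_one : LipschitzWith 1 g := hg.weaken (min_le_right _ _)
  have hg_int (μ : Measure X) [IsProbabilityMeasure μ] : Integrable g μ :=
    .of_bound hg.continuous.measurable.aestronglyMeasurable B
      (.of_forall fun x => (Real.norm_of_nonneg (hg_nonneg x)).trans_le (hgB x))
  have hCg : Integrable (glsganCost C g) (P.prod Q) := by
    rw [glsganCost_of_lipschitzWith_one hC_eq hg_one]
    exact integrable_dist_add_sub hd (hg_int P) (hg_int Q)
  exact integral_le_integral_of_integral_glsganCost_le hC_ge hC_eq hd hLP hLQ hCL hgen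
    (hg_int P) (hg_int Q) hg_one (hmin g hg_nonneg (hg.weaken (min_le_left _ _)) hCg)

/-- **Paper's Lemma 5**: distributional consistency of the Generalized LS-GAN for any
admissible cost function `C` (continuous, `C(a) ≥ a` everywhere, `C(a) = a` for `a ≥ 0`).
At a Nash equilibrium the generated density `q` equals the data density `p` a.e. -/
theorem glsgan_distributional_consistency
    (n : ℕ) (C : ℝ → ℝ) (hC_cont : Continuous C)
    (hC_ge : ∀ a : ℝ, a ≤ C a) (hC_eq : ∀ a : ℝ, 0 ≤ a → C a = a)
    (D : Set (EuclideanSpace ℝ (Fin n))) (hD : IsCompact D)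
    (κ : ℝ) (hκ : 0 < κ)
    (p q : EuclideanSpace ℝ (Fin n) → ℝ)
    (hp_meas : Measurable p) (hp_nonneg : ∀ x, 0 ≤ p x)
    (hp_int : (∫ x, p x) = 1)
    (hp_lip : ∃ κp : ℝ, ∀ x z, |p x - p z| ≤ κp * ‖x - z‖)
    (hp_supp : ∀ x, x ∉ D → p x = 0)
    (hq_meas : Measurable q) (hq_nonneg : ∀ x, 0 ≤ q x)
    (hq_int : (∫ x, q x) = 1)
    (hq_lip : ∃ κq : ℝ, ∀ x z, |q x - q z| ≤ κq * ‖x - z‖)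
    (hq_supp : ∀ x, x ∉ D → q x = 0)
    (L : EuclideanSpace ℝ (Fin n) → ℝ)
    (hL_nonneg : ∀ x, 0 ≤ L x)
    (hL_lip : ∀ x z, |L x - L z| ≤ κ * ‖x - z‖)
    (hmin : ∀ L' : EuclideanSpace ℝ (Fin n) → ℝ,
      (∀ x, 0 ≤ L' x) → (∀ x z, |L' x - L' z| ≤ κ * ‖x - z‖) →
      glsganS n C L p q ≤ glsganS n C L' p q)
    (hgen : (∫ z, L z * q z) ≤ ∫ x, L x * p x) :
    (∫ x, |p x - q x|) = 0 ∧ p =ᵐ[volume] q := by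
  lift κ to NNReal using hκ.le
  have := isProbabilityMeasure_densityMeasure hp_nonneg hp_int
  have := isProbabilityMeasure_densityMeasure hq_nonneg hq_int
  have hPD : densityMeasure volume p Dᶜ = 0 := densityMeasure_apply_eq_zero hp_meas hp_supp
  have hQD : densityMeasure volume q Dᶜ = 0 := densityMeasure_apply_eq_zero hq_meas hq_supp
  have hL := (lipschitzWith_iff_abs_sub_le.2 hL_lip).continuous
  have hCL := integrable_glsganCost_of_isCompact hC_cont hL hD hPD hQD
  have laws_eq : densityMeasure volume p = densityMeasure volume q := by
    refine glsgan_distributional_consistency_general hC_ge hC_eq (NNReal.coe_pos.1 hκ)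
      (integrable_of_continuous_of_measure_compl_eq_zero hL hD hPD)
      (integrable_of_continuous_of_measure_compl_eq_zero hL hD hQD)
      hCL (fun g hg_nonneg hg hCg => ?_) ?_
    · rw [integral_glsganCost_densityMeasure hp_meas hp_nonneg hq_meas hq_nonneg hCL,
        integral_glsganCost_densityMeasure hp_meas hp_nonneg hq_meas hq_nonneg hCg]
      exact hmin g hg_nonneg (lipschitzWith_iff_abs_sub_le.1 hg)
    · rwa [integral_densityMeasure hp_meas hp_nonneg, integral_densityMeasure hq_meas hq_nonneg]
  have hpq := ae_eq_of_densityMeasure_eq hp_meas hp_nonneg hq_meas hq_nonneg laws_eq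
  refine ⟨integral_eq_zero_of_ae ?_, hpq⟩
  filter_upwards [hpq] with x hx
  simp [hx]
end

section
/- Suppose L0 ∈ F_κ minimizes S_m over F_κ, set l_i = L0(x^(i)) for i = 1,…,2m, and define ĥL(x) = max_{1≤i≤2m} (l_i − κ d(x, x^(i)))_+ and t̃L(x) = min_{1≤i≤2m} (l_i + κ d(x, x^(i))). Then for every γ ∈ [0,1], the convex combination γ ĥL + (1−γ) t̃L belongs to F_κ and minimizes S_m over F_κ. (Paper's Corollary 1.) -/
/-- `Fκ κ` is the class of nonnegative κ-Lipschitz functions on a metric space. -/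
def Fkappa {X : Type*} [MetricSpace X] (κ : ℝ) : Set (X → ℝ) :=
  {L | (∀ x, 0 ≤ L x) ∧ ∀ x z, |L x - L z| ≤ κ * dist x z}

/-- The empirical LS-GAN objective on `2m` points `xs` (the first `m` real, the last `m`
generated): `S_m(L) = (1/m) Σᵢ L(x⁽ⁱ⁾) + (λ/m) Σᵢ (d(x⁽ⁱ⁾, x⁽ᵐ⁺ⁱ⁾) + L(x⁽ⁱ⁾) − L(x⁽ᵐ⁺ⁱ⁾))₊`. -/
noncomputable def empiricalS {X : Type*} [MetricSpace X] (lam : ℝ) (m : ℕ)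
    (xs : Fin (m + m) → X) (L : X → ℝ) : ℝ :=
  (1 / (m : ℝ)) * ∑ i : Fin m, L (xs (Fin.castAdd m i)) +
    (lam / (m : ℝ)) * ∑ i : Fin m,
      max (dist (xs (Fin.castAdd m i)) (xs (Fin.natAdd m i)) +
        L (xs (Fin.castAdd m i)) - L (xs (Fin.natAdd m i))) 0

/-!
The functions `ĥL` and `t̃L` are the smallest and the largest members of `F_κ` that agree with
`L0` at the sample points (the McShane–Whitney extensions). As `F_κ` is convex, every convex
combination of them is again a member of `F_κ` agreeing with `L0` at the sample points, and
`S_m` only sees the values there.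
-/

section

variable {X ι : Type*} [MetricSpace X] {κ : ℝ} {L : X → ℝ}

theorem mem_Fkappa_iff :
    L ∈ Fkappa κ ↔ (∀ x, 0 ≤ L x) ∧ ∀ x z, L x ≤ L z + κ * dist x z := by
  refine and_congr_right fun _ => ⟨fun h x z => ?_, fun h x z => abs_sub_le_iff.2 ⟨?_, ?_⟩⟩
  · linarith [(abs_sub_le_iff.1 (h x z)).1]
  · linarith [h x z]
  · rw [dist_comm]
    linarith [h z x]

theorem convex_Fkappa (κ : ℝ) : Convex ℝ (Fkappa κ : Set (X → ℝ)) := by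
  intro L hL M hM a b ha hb hab
  rw [mem_Fkappa_iff] at hL hM ⊢
  refine ⟨fun x => add_nonneg (mul_nonneg ha (hL.1 x)) (mul_nonneg hb (hM.1 x)), fun x z => ?_⟩
  calc a * L x + b * M x
      ≤ a * (L z + κ * dist x z) + b * (M z + κ * dist x z) := by
        gcongr
        exacts [hL.2 x z, hM.2 x z]
    _ = a * L z + b * M z + (a + b) * (κ * dist x z) := by ring
    _ = a * L z + b * M z + κ * dist x z := by rw [hab, one_mul]

theorem iSup_mem_Fkappa [Nonempty ι] {f : ι → X → ℝ} (hf : ∀ i, f i ∈ Fkappa κ)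
    (hbdd : ∀ x, BddAbove (Set.range fun i => f i x)) : (fun x => ⨆ i, f i x) ∈ Fkappa κ := by
  simp only [mem_Fkappa_iff] at hf ⊢
  refine ⟨fun x => Real.iSup_nonneg fun i => (hf i).1 x, fun x z => ciSup_le fun i => ?_⟩
  calc f i x ≤ f i z + κ * dist x z := (hf i).2 x z
    _ ≤ (⨆ i, f i z) + κ * dist x z := by
      gcongr
      exact le_ciSup (hbdd z) i

theorem iInf_mem_Fkappa [Nonempty ι] {f : ι → X → ℝ} (hf : ∀ i, f i ∈ Fkappa κ) :
    (fun x => ⨅ i, f i x) ∈ Fkappa κ := by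
  refine mem_Fkappa_iff.2 ⟨fun x => Real.iInf_nonneg fun i => (hf i).1 x, fun x z => ?_⟩
  have hbdd : BddBelow (Set.range fun i => f i x) :=
    ⟨0, Set.forall_mem_range.2 fun i => (hf i).1 x⟩
  refine sub_le_iff_le_add.1 (le_ciInf fun i => sub_le_iff_le_add.2 ?_)
  calc ⨅ i, f i x ≤ f i x := ciInf_le hbdd i
    _ ≤ f i z + κ * dist x z := (mem_Fkappa_iff.1 (hf i)).2 x z

theorem max_sub_mul_dist_mem_Fkappa (hκ : 0 ≤ κ) (a : ℝ) (p : X) :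
    (fun x => max (a - κ * dist x p) 0) ∈ Fkappa κ := by
  refine mem_Fkappa_iff.2 ⟨fun x => le_max_right _ _, fun x z => max_le ?_ (by positivity)⟩
  have triangle := mul_le_mul_of_nonneg_left (dist_triangle_left z p x) hκ
  linarith [le_max_left (a - κ * dist z p) 0]

theorem add_mul_dist_mem_Fkappa (hκ : 0 ≤ κ) {a : ℝ} (ha : 0 ≤ a) (p : X) :
    (fun x => a + κ * dist x p) ∈ Fkappa κ := by
  refine mem_Fkappa_iff.2 ⟨fun x => by positivity, fun x z => ?_⟩
  have triangle := mul_le_mul_of_nonneg_left (dist_triangle x z p) hκ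
  linarith

theorem max_sub_mul_dist_le (hL : L ∈ Fkappa κ) (x p : X) :
    max (L p - κ * dist x p) 0 ≤ L x := by
  refine max_le ?_ (hL.1 x)
  rw [dist_comm, sub_le_iff_le_add]
  exact (mem_Fkappa_iff.1 hL).2 p x

/-- The function `ĥL` of the paper, for the values of `L` at the points `xs i`. For
nonempty `ι` and `L ∈ Fkappa κ` the family is bounded by `L x`, so `⨆` is a genuine supremum. -/
noncomputable def lowerConeEnvelope (κ : ℝ) (xs : ι → X) (L : X → ℝ) (x : X) : ℝ :=
  ⨆ i, max (L (xs i) - κ * dist x (xs i)) 0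

/-- The function `t̃L` of the paper, for the values of `L` at the points `xs i`. -/
noncomputable def upperConeEnvelope (κ : ℝ) (xs : ι → X) (L : X → ℝ) (x : X) : ℝ :=
  ⨅ i, (L (xs i) + κ * dist x (xs i))

theorem bddAbove_range_max_sub_mul_dist (hL : L ∈ Fkappa κ) (xs : ι → X) (x : X) :
    BddAbove (Set.range fun i => max (L (xs i) - κ * dist x (xs i)) 0) :=
  ⟨L x, Set.forall_mem_range.2 fun i => max_sub_mul_dist_le hL x (xs i)⟩

theorem lowerConeEnvelope_mem_Fkappa [Nonempty ι] (hκ : 0 ≤ κ) (hL : L ∈ Fkappa κ)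
    (xs : ι → X) : lowerConeEnvelope κ xs L ∈ Fkappa κ :=
  iSup_mem_Fkappa (fun i => max_sub_mul_dist_mem_Fkappa hκ (L (xs i)) (xs i))
    (bddAbove_range_max_sub_mul_dist hL xs)

theorem upperConeEnvelope_mem_Fkappa [Nonempty ι] (hκ : 0 ≤ κ) (hL : ∀ x, 0 ≤ L x)
    (xs : ι → X) : upperConeEnvelope κ xs L ∈ Fkappa κ :=
  iInf_mem_Fkappa fun i => add_mul_dist_mem_Fkappa hκ (hL (xs i)) (xs i)

theorem eqOn_lowerConeEnvelope (hL : L ∈ Fkappa κ) (xs : ι → X) :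
    Set.EqOn (lowerConeEnvelope κ xs L) L (Set.range xs) := by
  rintro _ ⟨j, rfl⟩
  have : Nonempty ι := ⟨j⟩
  refine le_antisymm (ciSup_le fun i => max_sub_mul_dist_le hL (xs j) (xs i)) ?_
  refine le_ciSup_of_le (bddAbove_range_max_sub_mul_dist hL xs (xs j)) j ?_
  simp

theorem eqOn_upperConeEnvelope (hL : L ∈ Fkappa κ) (xs : ι → X) :
    Set.EqOn (upperConeEnvelope κ xs L) L (Set.range xs) := by
  rintro _ ⟨j, rfl⟩
  have : Nonempty ι := ⟨j⟩
  have le_cone (i : ι) : L (xs j) ≤ L (xs i) + κ * dist (xs j) (xs i) :=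
    (mem_Fkappa_iff.1 hL).2 (xs j) (xs i)
  refine le_antisymm ?_ (le_ciInf le_cone)
  refine ciInf_le_of_le ⟨L (xs j), Set.forall_mem_range.2 le_cone⟩ j ?_
  simp

theorem dependsOn_empiricalS (lam : ℝ) (m : ℕ) (xs : Fin (m + m) → X) :
    DependsOn (empiricalS lam m xs) (Set.range xs) := by
  intro L M h
  simp only [empiricalS, h _ (Set.mem_range_self _)]

theorem lsgan_convex_combination_optimal_general {β : Type*} [Preorder β] [Nonempty ι]
    (hκ : 0 ≤ κ) (xs : ι → X) {S : (X → ℝ) → β} (hS : DependsOn S (Set.range xs))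
    (hL : L ∈ Fkappa κ) (hmin : IsMinOn S (Fkappa κ) L) {γ : ℝ} (hγ0 : 0 ≤ γ) (hγ1 : γ ≤ 1) :
    (fun x => γ * lowerConeEnvelope κ xs L x + (1 - γ) * upperConeEnvelope κ xs L x) ∈ Fkappa κ ∧
      IsMinOn S (Fkappa κ)
        (fun x => γ * lowerConeEnvelope κ xs L x + (1 - γ) * upperConeEnvelope κ xs L x) := by
  refine ⟨convex_Fkappa κ (lowerConeEnvelope_mem_Fkappa hκ hL xs)
    (upperConeEnvelope_mem_Fkappa hκ hL.1 xs) hγ0 (sub_nonneg.2 hγ1) (add_sub_cancel γ 1), ?_⟩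
  refine isMinOn_iff.2 fun M hM => (hS fun x hx => ?_).trans_le (isMinOn_iff.1 hmin M hM)
  rw [eqOn_lowerConeEnvelope hL xs hx, eqOn_upperConeEnvelope hL xs hx]
  ring

end

/-- **Paper's Corollary 1**: if `L0 ∈ F_κ` minimizes `S_m`, then for every `γ ∈ [0,1]` the
convex combination `γ ĥL + (1−γ) t̃L` of the two cone-shaped optimal loss functions
belongs to `F_κ` and also minimizes `S_m` over `F_κ`. -/
theorem lsgan_convex_combination_optimal
    {X : Type*} [MetricSpace X] (κ lam : ℝ) (hκ : 0 < κ) (hlam : 0 < lam)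
    (m : ℕ) (hm : 0 < m) (xs : Fin (m + m) → X)
    (L0 : X → ℝ) (hL0 : L0 ∈ Fkappa κ)
    (hmin : ∀ L ∈ Fkappa κ, empiricalS lam m xs L0 ≤ empiricalS lam m xs L)
    (γ : ℝ) (hγ0 : 0 ≤ γ) (hγ1 : γ ≤ 1) :
    (fun x => γ * (⨆ i : Fin (m + m), max (L0 (xs i) - κ * dist x (xs i)) 0) +
        (1 - γ) * ⨅ i : Fin (m + m), (L0 (xs i) + κ * dist x (xs i))) ∈ Fkappa κ ∧
    (∀ L ∈ Fkappa κ,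
      empiricalS lam m xs
          (fun x => γ * (⨆ i : Fin (m + m), max (L0 (xs i) - κ * dist x (xs i)) 0) +
            (1 - γ) * ⨅ i : Fin (m + m), (L0 (xs i) + κ * dist x (xs i)))
        ≤ empiricalS lam m xs L) := by
  have : Nonempty (Fin (m + m)) := ⟨⟨0, by lia⟩⟩
  exact (lsgan_convex_combination_optimal_general hκ.le xs (dependsOn_empiricalS lam m xs) hL0
    (isMinOn_iff.2 hmin) hγ0 hγ1).imp_right isMinOn_iff.1
end
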